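/- The set of Gödel numbers e of partial recursive functions f : ℕ² ⇀ ℕ such that the quotient order associated to the transitive closure of dom f is finite is Σ^0_3-complete. -/

import Mathlib

open Nat.Partrec (Code)

/-- `φ_e`, the partial recursive function with Gödel number `e`; here viewed as a
function `ℕ² ⇀ ℕ` via the recursive pairing `Nat.pair`. -/
def phi (e : ℕ) : ℕ →. ℕ := (Denumerable.ofNat Code e).eval

/-- The domain of `φ_e`, viewed as a binary relation on `ℕ`. -/
def domRel (e : ℕ) (x y : ℕ) : Prop := (phi e (Nat.pair x y)).Dom

/-- `A` is `Σ⁰₂` : `A = {x : ∃y ∀z R(x,y,z)}` for some recursive relation `R`. -/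
def IsSigma2 (A : Set ℕ) : Prop :=
  ∃ r : ℕ → ℕ → ℕ → Bool, Computable (fun x : ℕ × ℕ × ℕ => r x.1 x.2.1 x.2.2) ∧
    ∀ x : ℕ, x ∈ A ↔ ∃ y : ℕ, ∀ z : ℕ, r x y z = true

/-- `A` is `Π⁰₂` : the complement of `A` is `Σ⁰₂`. -/
def IsPi2 (A : Set ℕ) : Prop := IsSigma2 Aᶜ

/-- `A` is `Σ⁰₃` : `A = {x : ∃y ∀z ∃w R(x,y,z,w)}` for some recursive relation `R`. -/
def IsSigma3 (A : Set ℕ) : Prop :=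
  ∃ r : ℕ → ℕ → ℕ → ℕ → Bool,
    Computable (fun x : ℕ × ℕ × ℕ × ℕ => r x.1 x.2.1 x.2.2.1 x.2.2.2) ∧
    ∀ x : ℕ, x ∈ A ↔ ∃ y : ℕ, ∀ z : ℕ, ∃ w : ℕ, r x y z w = true

/-- `A` is `Π⁰₂`-complete. -/
def IsPi2Complete (A : Set ℕ) : Prop :=
  IsPi2 A ∧ ∀ B : Set ℕ, IsPi2 B → ManyOneReducible (· ∈ B) (· ∈ A)

def IsSigma2Complete (A : Set ℕ) : Prop :=
  IsSigma2 A ∧ ∀ B : Set ℕ, IsSigma2 B → ManyOneReducible (· ∈ B) (· ∈ A)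

def IsSigma3Complete (A : Set ℕ) : Prop :=
  IsSigma3 A ∧ ∀ B : Set ℕ, IsSigma3 B → ManyOneReducible (· ∈ B) (· ∈ A)

/-- The field of a binary relation on `ℕ`: the integers occurring in related pairs. -/
def FldR (r : ℕ → ℕ → Prop) : Set ℕ := {x : ℕ | ∃ y : ℕ, r x y ∨ r y x}

/-- The preorder generated by `r` : its reflexive–transitive closure. -/
def PreR (r : ℕ → ℕ → Prop) : ℕ → ℕ → Prop := Relation.ReflTransGen r

/-- The equivalence classes of the quotient of the preorder generated by `r`
(on the field of `r`) by the equivalence `x ∼ y ↔ x ⪯ y ∧ y ⪯ x`. -/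
def ClassesR (r : ℕ → ℕ → Prop) : Set (Set ℕ) :=
  {S : Set ℕ | ∃ x ∈ FldR r, S = {y ∈ FldR r | PreR r x y ∧ PreR r y x}}

/-- The quotient order associated to `r` is a finite linear order with exactly
`n` elements. -/
def QuotLinCard (r : ℕ → ℕ → Prop) (n : ℕ) : Prop :=
  (∀ x ∈ FldR r, ∀ y ∈ FldR r, PreR r x y ∨ PreR r y x) ∧
    (ClassesR r).Finite ∧ (ClassesR r).ncard = n

/-!
Finiteness of the quotient order of `dom φ_e` says that some `N` satisfies: every `x` in the field
is equivalent to some `y ≤ N`. Membership in the field and the generated preorder are both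
recursively enumerable, so what follows `∃ N` is a `Π⁰₂` condition.

For hardness, write a `Σ⁰₃` condition as `∃ y, ∀ z, P y z` with `P` recursively enumerable, and let
`H y n` say that some `y' ≤ y` satisfies `P y' z` for all `z < n`. By the pigeonhole principle the
condition is also `∃ y, ∀ n, H y n`, and `H` is now increasing in `y` and decreasing in `n`. The
cells `(y, n)` with `H y n` but not `H y (n + 1)` number exactly one in each row where `H y`
eventually fails; since the rows where it never fails form an up-set, there are finitely many such
cells iff the condition holds. The relation that puts all cells with `H y n` in the field and
identifies those with `H y (n + 1)` to a single point is recursively enumerable uniformly in a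
parameter, and its quotient order is an antichain of these last cells, plus at most one point.
-/

-- The default `a` is never reached: it only makes the lookups total, hence primitive recursive.
theorem reflTransGen_iff_exists_list {β : Type*} {r : β → β → Prop} {a b : β} :
    Relation.ReflTransGen r a b ↔ ∃ l : List β,
      (∀ i < l.length, r ((a :: l)[i]?.getD a) (l[i]?.getD a)) ∧
        (a :: l)[l.length]?.getD a = b := by
  have isChain_iff (l : List β) : (a :: l).IsChain r ↔
      ∀ i < l.length, r ((a :: l)[i]?.getD a) (l[i]?.getD a) := by
    rw [List.isChain_iff_getElem]
    constructor
    · intro h i hi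
      simpa [List.getElem?_eq_getElem, hi, hi.trans (Nat.lt_succ_self _)] using
        h i (Nat.succ_lt_succ hi)
    · intro h i hi
      have hi' : i < l.length := Nat.lt_of_succ_lt_succ hi
      simpa [List.getElem?_eq_getElem, hi', hi'.trans (Nat.lt_succ_self _)] using h i hi'
  have getLast_eq (l : List β) :
      (a :: l).getLast (List.cons_ne_nil _ _) = (a :: l)[l.length]?.getD a := by
    simp [List.getLast_eq_getElem]
  constructor
  · intro h
    obtain ⟨l, hl, hb⟩ := List.exists_isChain_cons_of_relationReflTransGen h
    exact ⟨l, (isChain_iff l).1 hl, getLast_eq l ▸ hb⟩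
  · rintro ⟨l, hl, hb⟩
    exact List.relationReflTransGen_of_exists_isChain_cons l ((isChain_iff l).2 hl)
      ((getLast_eq l).trans hb)

section RecursivelyEnumerable

variable {α β : Type*} [Primcodable α] [Primcodable β]

theorem rePred_exists_of_primrecRel {q : α → β → Prop} (hq : PrimrecRel q) :
    REPred fun a => ∃ b, q a b := by
  classical
  have guarded : Primrec₂ fun (a : α) (n : ℕ) =>
      (Encodable.decode n : Option β).bind fun b => Option.guard (q a) b :=
    Primrec.option_bind (Primrec.decode.comp Primrec.snd)
      (Primrec.option_guard (p := fun (x : (α × ℕ) × β) b => q x.1.1 b)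
        (hq.comp (Primrec.fst.comp (Primrec.fst.comp Primrec.fst)) Primrec.snd) Primrec.snd)
  refine (Partrec.rfindOpt guarded.to_comp).dom_re.of_eq fun a => ?_
  simp only [Nat.rfindOpt_dom, Option.mem_def, Option.bind_eq_some_iff, Option.guard_eq_some_iff,
    decide_eq_true_eq]
  constructor
  · rintro ⟨-, -, b, -, rfl, hb⟩
    exact ⟨b, hb⟩
  · rintro ⟨b, hb⟩
    exact ⟨Encodable.encode b, b, b, Encodable.encodek b, rfl, hb⟩

theorem rePred_iff_exists_primrecRel {p : α → Prop} :
    REPred p ↔ ∃ q : α → ℕ → Prop, PrimrecRel q ∧ ∀ a, p a ↔ ∃ k, q a k := by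
  constructor
  · intro hp
    obtain ⟨c, hc⟩ := Code.exists_code.1 hp
    refine ⟨fun a k => (c.evaln k (Encodable.encode a)).isSome, ?_, fun a => ?_⟩
    · exact Primrec.eq.comp (Primrec.option_isSome.comp (Code.primrec_evaln.comp
        ((Primrec.snd.pair (Primrec.const c)).pair (Primrec.encode.comp Primrec.fst))))
        (Primrec.const true)
    · have dom_iff : (c.eval (Encodable.encode a)).Dom ↔ p a := by
        simp [hc, Part.assert]
      simp only [← dom_iff, Part.dom_iff_mem, Code.evaln_complete, Option.isSome_iff_exists,
        Option.mem_def]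
      exact exists_comm
  · rintro ⟨q, hq, hpq⟩
    exact (rePred_exists_of_primrecRel hq).of_eq fun a => (hpq a).symm

theorem rePred_comp {p : β → Prop} (hp : REPred p) {f : α → β} (hf : Computable f) :
    REPred fun a => p (f a) :=
  Partrec.comp hp hf

theorem rePred_and {p q : α → Prop} (hp : REPred p) (hq : REPred q) :
    REPred fun a => p a ∧ q a := by
  obtain ⟨p', hp', hpp'⟩ := rePred_iff_exists_primrecRel.1 hp
  obtain ⟨q', hq', hqq'⟩ := rePred_iff_exists_primrecRel.1 hq
  have both : PrimrecRel fun a (k : ℕ × ℕ) => p' a k.1 ∧ q' a k.2 :=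
    PrimrecPred.and (hp'.comp Primrec.fst (Primrec.fst.comp Primrec.snd))
      (hq'.comp Primrec.fst (Primrec.snd.comp Primrec.snd))
  refine (rePred_exists_of_primrecRel both).of_eq fun a => ?_
  simp [hpp', hqq']

theorem rePred_or {p q : α → Prop} (hp : REPred p) (hq : REPred q) :
    REPred fun a => p a ∨ q a := by
  obtain ⟨p', hp', hpp'⟩ := rePred_iff_exists_primrecRel.1 hp
  obtain ⟨q', hq', hqq'⟩ := rePred_iff_exists_primrecRel.1 hq
  have either : PrimrecRel fun a k => p' a k ∨ q' a k := PrimrecPred.or hp' hq'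
  refine (rePred_exists_of_primrecRel either).of_eq fun a => ?_
  rw [hpp', hqq', ← exists_or]

theorem rePred_exists {p : α → β → Prop} (hp : REPred fun x : α × β => p x.1 x.2) :
    REPred fun a => ∃ b, p a b := by
  obtain ⟨q, hq, hpq⟩ := rePred_iff_exists_primrecRel.1 hp
  have uncurried : PrimrecRel fun a (w : β × ℕ) => q (a, w.1) w.2 :=
    hq.comp (Primrec.fst.pair (Primrec.fst.comp Primrec.snd)) (Primrec.snd.comp Primrec.snd)
  refine (rePred_exists_of_primrecRel uncurried).of_eq fun a => ?_
  simp only [Prod.exists, ← hpq (a, _)]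

theorem rePred_forall_lt {p : α → ℕ → Prop} (hp : REPred fun x : α × ℕ => p x.1 x.2)
    {f : α → ℕ} (hf : Computable f) : REPred fun a => ∀ z < f a, p a z := by
  obtain ⟨q, hq, hpq⟩ := rePred_iff_exists_primrecRel.1 hp
  have witnessed_lt : PrimrecRel fun (K : ℕ) (x : α × ℕ) => ∃ k < K, q x k :=
    (hq.swap.exists_mem_list.comp (Primrec.list_range.comp Primrec.fst) Primrec.snd).of_eq
      fun _ => by simp
  have swapped : PrimrecRel fun (z : ℕ) (y : (α × ℕ) × ℕ) => ∃ k < y.2, q (y.1.1, z) k :=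
    witnessed_lt.comp (Primrec.snd.comp Primrec.snd)
      ((Primrec.fst.comp (Primrec.fst.comp Primrec.snd)).pair Primrec.fst)
  have uniform : PrimrecRel fun (y : α × ℕ) (K : ℕ) => ∀ z < y.2, ∃ k < K, q (y.1, z) k :=
    (swapped.forall_mem_list.comp
      (Primrec.list_range.comp (Primrec.snd.comp Primrec.fst)) Primrec.id).of_eq
      fun _ => by simp
  refine (rePred_comp (rePred_exists_of_primrecRel uniform) (Computable.id.pair hf)).of_eq
    fun a => ?_
  simp only [id, hpq (a, _)]
  constructor
  · rintro ⟨K, hK⟩ z hz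
    obtain ⟨k, -, hk⟩ := hK z hz
    exact ⟨k, hk⟩
  · intro h
    choose! k hk using h
    refine ⟨(Finset.range (f a)).sup k + 1, fun z hz => ⟨k z, ?_, hk z hz⟩⟩
    exact Nat.lt_succ_of_le (Finset.le_sup (Finset.mem_range.2 hz))

theorem primrec_getElem?_getD {l : α → List β} {i : α → ℕ} {b : α → β}
    (hl : Primrec l) (hi : Primrec i) (hb : Primrec b) :
    Primrec fun x => (l x)[i x]?.getD (b x) :=
  Primrec.option_getD.comp (Primrec.list_getElem?.comp hl hi) hb

theorem rePred_reflTransGen {r : α → β → β → Prop}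
    (hr : REPred fun x : α × β × β => r x.1 x.2.1 x.2.2) :
    REPred fun x : α × β × β => Relation.ReflTransGen (r x.1) x.2.1 x.2.2 := by
  have source : Primrec fun y : (α × β × β) × List β => y.1.2.1 :=
    Primrec.fst.comp (Primrec.snd.comp Primrec.fst)
  have path : Primrec fun y : (α × β × β) × List β => y.1.2.1 :: y.2 :=
    Primrec.list_cons.comp source Primrec.snd
  have length : Primrec fun y : (α × β × β) × List β => y.2.length :=
    Primrec.list_length.comp Primrec.snd
  have edge_source : Primrec fun z : ((α × β × β) × List β) × ℕ =>
      (z.1.1.2.1 :: z.1.2)[z.2]?.getD z.1.1.2.1 :=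
    primrec_getElem?_getD (path.comp Primrec.fst) Primrec.snd (source.comp Primrec.fst)
  have edge_target : Primrec fun z : ((α × β × β) × List β) × ℕ =>
      z.1.2[z.2]?.getD z.1.1.2.1 :=
    primrec_getElem?_getD (Primrec.snd.comp Primrec.fst) Primrec.snd (source.comp Primrec.fst)
  have edge : Computable fun z : ((α × β × β) × List β) × ℕ =>
      (z.1.1.1, (z.1.1.2.1 :: z.1.2)[z.2]?.getD z.1.1.2.1, z.1.2[z.2]?.getD z.1.1.2.1) :=
    ((Primrec.fst.comp (Primrec.fst.comp Primrec.fst)).pair (edge_source.pair edge_target)).to_comp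
  have endpoint : PrimrecPred fun y : (α × β × β) × List β =>
      (y.1.2.1 :: y.2)[y.2.length]?.getD y.1.2.1 = y.1.2.2 :=
    Primrec.eq.comp (primrec_getElem?_getD path length source)
      (Primrec.snd.comp (Primrec.snd.comp Primrec.fst))
  have steps : REPred fun y : (α × β × β) × List β => ∀ i < y.2.length,
      r y.1.1 ((y.1.2.1 :: y.2)[i]?.getD y.1.2.1) (y.2[i]?.getD y.1.2.1) :=
    rePred_forall_lt (rePred_comp hr edge) length.to_comp
  refine (rePred_exists (p := fun (x : α × β × β) l =>
    (∀ i < l.length, r x.1 ((x.2.1 :: l)[i]?.getD x.2.1) (l[i]?.getD x.2.1)) ∧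
      (x.2.1 :: l)[l.length]?.getD x.2.1 = x.2.2) ?_).of_eq
    fun _ => reflTransGen_iff_exists_list.symm
  exact rePred_and steps endpoint.computablePred.to_re

end RecursivelyEnumerable

section PartialRecursiveDomains

variable {α : Type*} [Primcodable α]

theorem rePred_domRel {e u v : α → ℕ} (he : Computable e) (hu : Computable u)
    (hv : Computable v) : REPred fun a => domRel (e a) (u a) (v a) :=
  (Code.eval_part.comp ((Computable.ofNat Code).comp he)
    (Primrec₂.natPair.to_comp.comp hu hv)).dom_re

theorem rePred_mem_fldR {e u : α → ℕ} (he : Computable e) (hu : Computable u) :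
    REPred fun a => u a ∈ FldR (domRel (e a)) := by
  have he' : Computable fun x : α × ℕ => e x.1 := he.comp Computable.fst
  have hu' : Computable fun x : α × ℕ => u x.1 := hu.comp Computable.fst
  exact rePred_exists (p := fun a v => domRel (e a) (u a) v ∨ domRel (e a) v (u a))
    (rePred_or (rePred_domRel he' hu' Computable.snd) (rePred_domRel he' Computable.snd hu'))

theorem rePred_preR {e u v : α → ℕ} (he : Computable e) (hu : Computable u)
    (hv : Computable v) : REPred fun a => PreR (domRel (e a)) (u a) (v a) :=
  rePred_comp (f := fun a => (e a, u a, v a))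
    (rePred_reflTransGen (r := domRel) (rePred_domRel Computable.fst
      (Computable.fst.comp Computable.snd) (Computable.snd.comp Computable.snd)))
    (he.pair (hu.pair hv))

theorem exists_computable_domRel_eq {r : α → ℕ → ℕ → Prop}
    (hr : REPred fun x : α × ℕ × ℕ => r x.1 x.2.1 x.2.2) :
    ∃ f : α → ℕ, Computable f ∧ ∀ a, domRel (f a) = r a := by
  have paired : REPred fun x : α × ℕ => r x.1 x.2.unpair.1 x.2.unpair.2 :=
    rePred_comp (f := fun x : α × ℕ => (x.1, x.2.unpair)) hr
      (Primrec.fst.pair (Primrec.unpair.comp Primrec.snd)).to_comp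
  obtain ⟨c, hc⟩ := Code.exists_code.1 paired
  refine ⟨fun a => Encodable.encode (c.curry (Encodable.encode a)), ?_, fun a => ?_⟩
  · exact (Primrec.encode.comp
      (Code.primrec₂_curry.comp (Primrec.const c) Primrec.encode)).to_comp
  · funext u v
    have eval_pair : c.eval (Nat.pair (Encodable.encode a) (Nat.pair u v)) = _ :=
      congrFun hc (Encodable.encode (a, Nat.pair u v))
    simp [domRel, phi, Code.eval_curry, eval_pair, Part.assert]

end PartialRecursiveDomains

section ArithmeticalHierarchy

theorem IsSigma3.of_rePred_imp {A : Set ℕ} {P Q : ℕ → ℕ → ℕ → Prop}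
    (hP : REPred fun x : ℕ × ℕ × ℕ => P x.1 x.2.1 x.2.2)
    (hQ : REPred fun x : ℕ × ℕ × ℕ => Q x.1 x.2.1 x.2.2)
    (hA : ∀ x, x ∈ A ↔ ∃ y, ∀ z, P x y z → Q x y z) : IsSigma3 A := by
  classical
  obtain ⟨p, hp, hPp⟩ := rePred_iff_exists_primrecRel.1 hP
  obtain ⟨q, hq, hQq⟩ := rePred_iff_exists_primrecRel.1 hQ
  refine ⟨fun x y z w => decide (p (x, y, z.unpair.1) z.unpair.2 → q (x, y, z.unpair.1) w),
    ?_, fun x => ?_⟩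
  · have unpaired : Primrec fun t : ℕ × ℕ × ℕ × ℕ => t.2.2.1.unpair :=
      Primrec.unpair.comp (Primrec.fst.comp (Primrec.snd.comp Primrec.snd))
    have triple : Primrec fun t : ℕ × ℕ × ℕ × ℕ => (t.1, t.2.1, t.2.2.1.unpair.1) :=
      Primrec.fst.pair ((Primrec.fst.comp Primrec.snd).pair (Primrec.fst.comp unpaired))
    have implication : PrimrecPred fun t : ℕ × ℕ × ℕ × ℕ =>
        p (t.1, t.2.1, t.2.2.1.unpair.1) t.2.2.1.unpair.2 →
          q (t.1, t.2.1, t.2.2.1.unpair.1) t.2.2.2 :=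
      (PrimrecPred.or (hp.comp triple (Primrec.snd.comp unpaired)).not
        (hq.comp triple (Primrec.snd.comp (Primrec.snd.comp Primrec.snd)))).of_eq
        fun _ => imp_iff_not_or.symm
    exact implication.decide.to_comp
  · simp only [hA, hPp (x, _, _), hQq (x, _, _), decide_eq_true_eq, exists_imp]
    refine exists_congr fun y => ⟨fun h z => ?_, fun h z k hp => ?_⟩
    · by_cases hz : p (x, y, z.unpair.1) z.unpair.2
      · exact (h _ _ hz).imp fun _ hw _ => hw
      · exact ⟨0, fun hp => absurd hp hz⟩
    · obtain ⟨w, hw⟩ := h (Nat.pair z k)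
      exact ⟨w, by simpa [hp] using hw⟩

theorem IsSigma3.exists_rePred {A : Set ℕ} (hA : IsSigma3 A) :
    ∃ P : ℕ → ℕ → ℕ → Prop, (REPred fun x : ℕ × ℕ × ℕ => P x.1 x.2.1 x.2.2) ∧
      ∀ x, x ∈ A ↔ ∃ y, ∀ z, P x y z := by
  obtain ⟨r, hr, hA⟩ := hA
  have reassociate : Computable fun t : (ℕ × ℕ × ℕ) × ℕ => (t.1.1, t.1.2.1, t.1.2.2, t.2) :=
    (Computable.fst.comp Computable.fst).pair
      ((Computable.fst.comp (Computable.snd.comp Computable.fst)).pair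
        ((Computable.snd.comp (Computable.snd.comp Computable.fst)).pair Computable.snd))
  have matrix : ComputablePred fun t : (ℕ × ℕ × ℕ) × ℕ => r t.1.1 t.1.2.1 t.1.2.2 t.2 = true :=
    ComputablePred.computable_iff.2 ⟨_, hr.comp reassociate, rfl⟩
  exact ⟨fun x y z => ∃ w, r x y z w = true,
    rePred_exists (p := fun (t : ℕ × ℕ × ℕ) w => r t.1 t.2.1 t.2.2 w = true) matrix.to_re, hA⟩

theorem exists_forall_iff_exists_forall_exists_le {P : ℕ → ℕ → Prop} :
    (∃ y, ∀ z, P y z) ↔ ∃ y, ∀ n, ∃ y' ≤ y, ∀ z < n, P y' z := by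
  constructor
  · rintro ⟨y, hy⟩
    exact ⟨y, fun n => ⟨y, le_rfl, fun z _ => hy z⟩⟩
  · rintro ⟨y, hy⟩
    by_contra! h
    choose z hz using h
    obtain ⟨y', hy', hP⟩ := hy ((Finset.range (y + 1)).sup z + 1)
    exact hz y' (hP _ (Nat.lt_succ_of_le
      (Finset.le_sup (Finset.mem_range.2 (Nat.lt_succ_of_le hy')))))

theorem IsSigma3.exists_rePred_monotone {A : Set ℕ} (hA : IsSigma3 A) :
    ∃ H : ℕ → ℕ → ℕ → Prop, (REPred fun x : ℕ × ℕ × ℕ => H x.1 x.2.1 x.2.2) ∧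
      (∀ x, Monotone (H x)) ∧ (∀ x y, Antitone (H x y)) ∧ (∀ x y, H x y 0) ∧
        ∀ x, x ∈ A ↔ ∃ y, ∀ n, H x y n := by
  obtain ⟨P, hP, hA⟩ := hA.exists_rePred
  refine ⟨fun x y n => ∃ y' ≤ y, ∀ z < n, P x y' z, ?_, ?_, ?_, ?_, ?_⟩
  · have bounded : REPred fun t : (ℕ × ℕ × ℕ) × ℕ => ∀ z < t.1.2.2, P t.1.1 t.2 z :=
      rePred_forall_lt (p := fun (t : (ℕ × ℕ × ℕ) × ℕ) z => P t.1.1 t.2 z)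
        (rePred_comp (f := fun t : ((ℕ × ℕ × ℕ) × ℕ) × ℕ => (t.1.1.1, t.1.2, t.2)) hP
          ((Computable.fst.comp (Computable.fst.comp Computable.fst)).pair
            ((Computable.snd.comp Computable.fst).pair Computable.snd)))
        (Computable.snd.comp (Computable.snd.comp Computable.fst))
    have le : PrimrecPred fun t : (ℕ × ℕ × ℕ) × ℕ => t.2 ≤ t.1.2.1 :=
      Primrec.nat_le.comp Primrec.snd (Primrec.fst.comp (Primrec.snd.comp Primrec.fst))
    exact rePred_exists (p := fun (t : ℕ × ℕ × ℕ) y' => y' ≤ t.2.1 ∧ ∀ z < t.2.2, P t.1 y' z)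
      (rePred_and le.computablePred.to_re bounded)
  · rintro x y₁ y₂ h n ⟨y', hy', hP⟩
    exact ⟨y', hy'.trans h, hP⟩
  · rintro x y n₁ n₂ h ⟨y', hy', hP⟩
    exact ⟨y', hy', fun z hz => hP z (hz.trans_le h)⟩
  · exact fun x y => ⟨y, le_rfl, fun z hz => absurd hz z.not_lt_zero⟩
  · exact fun x => (hA x).trans exists_forall_iff_exists_forall_exists_le

end ArithmeticalHierarchy

section QuotientOrders

theorem finite_classesR_iff {r : ℕ → ℕ → Prop} : (ClassesR r).Finite ↔
    ∃ N, ∀ x ∈ FldR r, ∃ y ≤ N, PreR r x y ∧ PreR r y x := by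
  constructor
  · intro finite
    obtain ⟨N, hN⟩ := (finite.image sInf).bddAbove
    refine ⟨N, fun x hx => ?_⟩
    have class_nonempty : {y ∈ FldR r | PreR r x y ∧ PreR r y x}.Nonempty :=
      ⟨x, hx, Relation.ReflTransGen.refl, Relation.ReflTransGen.refl⟩
    exact ⟨_, hN ⟨_, ⟨x, hx, rfl⟩, rfl⟩, (Nat.sInf_mem class_nonempty).2⟩
  · rintro ⟨N, hN⟩
    refine ((Set.finite_Iic N).image
      fun y => {z ∈ FldR r | PreR r y z ∧ PreR r z y}).subset ?_
    rintro _ ⟨x, hx, rfl⟩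
    obtain ⟨y, hy, hxy, hyx⟩ := hN x hx
    refine ⟨y, hy, Set.ext fun z => and_congr_right fun _ => ?_⟩
    exact ⟨fun ⟨hyz, hzy⟩ => ⟨hxy.trans hyz, hzy.trans hyx⟩,
      fun ⟨hxz, hzx⟩ => ⟨hyx.trans hxz, hzx.trans hxy⟩⟩

theorem isSigma3_setOf_finite_classesR_domRel :
    IsSigma3 {e : ℕ | (ClassesR (domRel e)).Finite} := by
  have index : Computable fun t : ℕ × ℕ × ℕ => t.1 := Computable.fst
  have point : Computable fun t : ℕ × ℕ × ℕ => t.2.2 := Computable.snd.comp Computable.snd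
  have index' : Computable fun t : (ℕ × ℕ × ℕ) × ℕ => t.1.1 := index.comp Computable.fst
  have point' : Computable fun t : (ℕ × ℕ × ℕ) × ℕ => t.1.2.2 := point.comp Computable.fst
  have le : PrimrecPred fun t : (ℕ × ℕ × ℕ) × ℕ => t.2 ≤ t.1.2.1 :=
    Primrec.nat_le.comp Primrec.snd (Primrec.fst.comp (Primrec.snd.comp Primrec.fst))
  have equivalent : REPred fun t : ℕ × ℕ × ℕ =>
      ∃ y ≤ t.2.1, PreR (domRel t.1) t.2.2 y ∧ PreR (domRel t.1) y t.2.2 :=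
    rePred_exists (p := fun (t : ℕ × ℕ × ℕ) y =>
        y ≤ t.2.1 ∧ PreR (domRel t.1) t.2.2 y ∧ PreR (domRel t.1) y t.2.2)
      (rePred_and le.computablePred.to_re (rePred_and
        (rePred_preR index' point' Computable.snd) (rePred_preR index' Computable.snd point')))
  exact IsSigma3.of_rePred_imp (P := fun e _ x => x ∈ FldR (domRel e))
    (Q := fun e N x => ∃ y ≤ N, PreR (domRel e) x y ∧ PreR (domRel e) y x)
    (rePred_mem_fldR index point) equivalent fun _ => finite_classesR_iff

/-- The reflexive relation with field `S ∪ T` whose generated preorder collapses `T` to a single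
class and leaves every other class a singleton. -/
def collapseRel (S T : Set ℕ) (a b : ℕ) : Prop :=
  a = b ∧ a ∈ S ∨ a ∈ T ∧ b ∈ T

theorem fldR_collapseRel (S T : Set ℕ) : FldR (collapseRel S T) = S ∪ T := by
  ext a
  constructor
  · rintro ⟨b, (⟨-, ha⟩ | ⟨ha, -⟩) | (⟨rfl, ha⟩ | ⟨-, ha⟩)⟩
    exacts [Or.inl ha, Or.inr ha, Or.inl ha, Or.inr ha]
  · rintro (ha | ha)
    exacts [⟨a, Or.inl (Or.inl ⟨rfl, ha⟩)⟩, ⟨a, Or.inl (Or.inr ⟨ha, ha⟩)⟩]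

theorem preR_collapseRel_iff {S T : Set ℕ} {a b : ℕ} :
    PreR (collapseRel S T) a b ↔ a = b ∨ a ∈ T ∧ b ∈ T := by
  constructor
  · intro h
    induction h with
    | refl => exact Or.inl rfl
    | tail _ hbc ih =>
      rcases hbc with ⟨rfl, -⟩ | ⟨hb, hc⟩
      · exact ih
      · exact Or.inr ⟨ih.elim (fun hab => hab ▸ hb) And.left, hc⟩
  · rintro (rfl | hab)
    exacts [Relation.ReflTransGen.refl, Relation.ReflTransGen.single (Or.inr hab)]

theorem finite_classesR_collapseRel_iff {S T : Set ℕ} :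
    (ClassesR (collapseRel S T)).Finite ↔ (S \ T).Finite := by
  simp only [finite_classesR_iff, fldR_collapseRel, preR_collapseRel_iff]
  constructor
  · rintro ⟨N, hN⟩
    refine (Set.finite_Iic N).subset fun a ⟨haS, haT⟩ => ?_
    obtain ⟨b, hb, rfl | ⟨ha, -⟩, -⟩ := hN a (Or.inl haS)
    exacts [hb, absurd ha haT]
  · intro finite
    obtain ⟨M, hM⟩ := finite.bddAbove
    obtain ⟨t, ht⟩ : ∃ t, ∀ a ∈ T, t ∈ T := by
      rcases T.eq_empty_or_nonempty with rfl | ⟨t, ht⟩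
      exacts [⟨0, fun _ ha => ha.elim⟩, ⟨t, fun _ _ => ht⟩]
    refine ⟨max M t, fun a ha => ?_⟩
    by_cases haT : a ∈ T
    · exact ⟨t, le_max_right _ _, Or.inr ⟨haT, ht a haT⟩, Or.inr ⟨ht a haT, haT⟩⟩
    · exact ⟨a, le_max_of_le_left (hM ⟨ha.resolve_right haT, haT⟩), Or.inl rfl, Or.inl rfl⟩

theorem finite_setOf_and_not_succ_iff {H : ℕ → ℕ → Prop} (mono : Monotone H)
    (anti : ∀ y, Antitone (H y)) (zero : ∀ y, H y 0) :
    {c : ℕ × ℕ | H c.1 c.2 ∧ ¬ H c.1 (c.2 + 1)}.Finite ↔ ∃ y, ∀ n, H y n := by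
  constructor
  · intro finite
    by_contra! h
    have last (y : ℕ) : ∃ n, ¬¬ H y n ∧ ¬ H y (n + 1) :=
      Nat.exists_not_and_succ_of_not_zero_of_exists (p := fun n => ¬ H y n) (not_not.2 (zero y))
        (h y)
    choose n hn using last
    have injective : Function.Injective fun y => (y, n y) := fun _ _ h => congrArg Prod.fst h
    refine Set.infinite_of_injective_forall_mem injective (fun y => ?_) finite
    exact ⟨not_not.1 (hn y).1, (hn y).2⟩
  · rintro ⟨y₀, hy₀⟩
    have row_lt : Set.MapsTo Prod.fst {c : ℕ × ℕ | H c.1 c.2 ∧ ¬ H c.1 (c.2 + 1)} (Set.Iio y₀) := by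
      rintro c ⟨-, hc⟩
      refine Set.mem_Iio.2 (not_le.1 fun hle => ?_)
      exact hc (mono hle _ (hy₀ _))
    have column_le {y m n : ℕ} (hm : H y m) (hn : ¬ H y (n + 1)) : m ≤ n := by
      by_contra! hlt
      exact hn (anti y hlt hm)
    refine Set.Finite.of_injOn row_lt ?_ (Set.finite_Iio y₀)
    rintro ⟨y, m⟩ ⟨hm, hm'⟩ ⟨_, n⟩ ⟨hn, hn'⟩ rfl
    exact congrArg (Prod.mk y) ((column_le hm hn').antisymm (column_le hn hm'))

end QuotientOrders

section Hardness

/-- The quotient order coding the condition `∃ y, ∀ n, H y n`: the cell `(y, n)` with `H y n`,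
coded by `Nat.pair y n`, is collapsed as soon as `H y (n + 1)` holds. -/
def cellRel (H : ℕ → ℕ → Prop) : ℕ → ℕ → Prop :=
  collapseRel {a | H a.unpair.1 a.unpair.2} {a | H a.unpair.1 (a.unpair.2 + 1)}

theorem finite_classesR_cellRel_iff {H : ℕ → ℕ → Prop} (mono : Monotone H)
    (anti : ∀ y, Antitone (H y)) (zero : ∀ y, H y 0) :
    (ClassesR (cellRel H)).Finite ↔ ∃ y, ∀ n, H y n := by
  rw [cellRel, finite_classesR_collapseRel_iff, ← finite_setOf_and_not_succ_iff mono anti zero,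
    ← Set.finite_image_iff Nat.pairEquiv.injective.injOn, Equiv.image_eq_preimage_symm]
  rfl

theorem rePred_cellRel {H : ℕ → ℕ → ℕ → Prop}
    (hH : REPred fun x : ℕ × ℕ × ℕ => H x.1 x.2.1 x.2.2) :
    REPred fun x : ℕ × ℕ × ℕ => cellRel (H x.1) x.2.1 x.2.2 := by
  have cell {a : ℕ × ℕ × ℕ → ℕ} (ha : Primrec a) : REPred fun t : ℕ × ℕ × ℕ =>
      H t.1 (a t).unpair.1 (a t).unpair.2 :=
    rePred_comp (f := fun t => (t.1, (a t).unpair)) hH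
      (Primrec.fst.pair (Primrec.unpair.comp ha)).to_comp
  have next_cell {a : ℕ × ℕ × ℕ → ℕ} (ha : Primrec a) : REPred fun t : ℕ × ℕ × ℕ =>
      H t.1 (a t).unpair.1 ((a t).unpair.2 + 1) :=
    rePred_comp (f := fun t => (t.1, (a t).unpair.1, (a t).unpair.2 + 1)) hH
      (Primrec.fst.pair ((Primrec.fst.comp (Primrec.unpair.comp ha)).pair
        (Primrec.succ.comp (Primrec.snd.comp (Primrec.unpair.comp ha))))).to_comp
  have source : Primrec fun t : ℕ × ℕ × ℕ => t.2.1 := Primrec.fst.comp Primrec.snd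
  have target : Primrec fun t : ℕ × ℕ × ℕ => t.2.2 := Primrec.snd.comp Primrec.snd
  have diagonal : PrimrecPred fun t : ℕ × ℕ × ℕ => t.2.1 = t.2.2 :=
    Primrec.eq.comp source target
  exact rePred_or (rePred_and diagonal.computablePred.to_re (cell source))
    (rePred_and (next_cell source) (next_cell target))

theorem IsSigma3.manyOneReducible_finite_classesR_domRel {B : Set ℕ} (hB : IsSigma3 B) :
    ManyOneReducible (· ∈ B) (· ∈ {e : ℕ | (ClassesR (domRel e)).Finite}) := by
  obtain ⟨H, hH, mono, anti, zero, mem_iff⟩ := hB.exists_rePred_monotone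
  obtain ⟨f, hf, domRel_f⟩ :=
    exists_computable_domRel_eq (r := fun x => cellRel (H x)) (rePred_cellRel hH)
  have finite_iff (x : ℕ) : (ClassesR (domRel (f x))).Finite ↔ ∃ y, ∀ n, H x y n :=
    domRel_f x ▸ finite_classesR_cellRel_iff (mono x) (anti x) (zero x)
  exact ⟨f, hf, fun x => (mem_iff x).trans (finite_iff x).symm⟩

end Hardness

/-- The set of Gödel numbers `e` such that the quotient order associated to the
transitive closure of `dom φ_e` is finite is `Σ⁰₃`-complete. -/
theorem stmt8 :
    IsSigma3Complete {e : ℕ | (ClassesR (domRel e)).Finite} :=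
  ⟨isSigma3_setOf_finite_classesR_domRel,
    fun _ hB => hB.manyOneReducible_finite_classesR_domRel⟩
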